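/- (Ticket zone principle on the line.) Let V : ℝ → ℝ be Borel measurable, locally integrable and nonnegative almost everywhere, assume Σ_V < ∞, and let λ be a real number with λ > Σ_V. Then for every R₁ > 0 there exist real numbers R₂, R₃ with R₁ ≤ R₂ < R₃ such that λ_V(A_{R₁,R₃}) ≤ λ and λ_V(A_{R₂,R₃}) = λ, where A_{r,s} := {x ∈ ℝ : r ≤ |x| ≤ s}. (This is the paper's Corollary 3.4 for the metric graph G = ℝ with center x = 0.) -/

import Mathlib

open MeasureTheory Set Filter Topology
open scoped ENNReal

/-- Rayleigh quotient of a test function `f` for the Schrödinger form with potential `V`. -/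
noncomputable def rayleigh (V : ℝ → ℝ) (f : ℝ → ℝ) : ℝ :=
  (∫ x, ((deriv f x) ^ 2 + V x * (f x) ^ 2)) / (∫ x, (f x) ^ 2)

/-- `f` is an admissible test function for the closed set `S`: continuously differentiable,
not identically zero, with compact support contained in `S`. -/
def TestFor (S : Set ℝ) (f : ℝ → ℝ) : Prop :=
  ContDiff ℝ 1 f ∧ f ≠ 0 ∧ HasCompactSupport f ∧ tsupport f ⊆ S

/-- Dirichlet ground state energy `λ_V(S)`, with `sInf ∅ = ∞`. -/
noncomputable def lambdaV (V : ℝ → ℝ) (S : Set ℝ) : ℝ≥0∞ :=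
  sInf {e : ℝ≥0∞ | ∃ f : ℝ → ℝ, TestFor S f ∧ e = ENNReal.ofReal (rayleigh V f)}

/-- `Σ_V`, the infimum of the essential spectrum of `-d²/dx² + V` on `ℝ`, characterized
Persson-style as `sup_{R>0} λ_V({|x| ≥ R})`. -/
noncomputable def SigmaV (V : ℝ → ℝ) : ℝ≥0∞ :=
  ⨆ R : ℝ, ⨆ _ : 0 < R, lambdaV V {x : ℝ | R ≤ |x|}

/-- A `k`-partition of `ℝ`: `k` closed connected subsets with nonempty interior whose
pairwise intersections are contained in both frontiers. -/
def IsPartitionR (k : ℕ) (G : Fin k → Set ℝ) : Prop :=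
  (∀ i, IsClosed (G i)) ∧ (∀ i, IsConnected (G i)) ∧
    (∀ i, (interior (G i)).Nonempty) ∧
    ∀ i j, i ≠ j → G i ∩ G j ⊆ frontier (G i) ∩ frontier (G j)

/-- The energy `Δ(P)` of a partition: the maximum of the ground state energies. -/
noncomputable def energyR (V : ℝ → ℝ) {k : ℕ} (G : Fin k → Set ℝ) : ℝ≥0∞ :=
  ⨆ i, lambdaV V (G i)

/-- The infimal `k`-partition energy `Δ*_k(ℝ)`. -/
noncomputable def optEnergyR (V : ℝ → ℝ) (k : ℕ) : ℝ≥0∞ :=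
  ⨅ G : {G : Fin k → Set ℝ // IsPartitionR k G}, energyR V G.1

/-!
For `r` in `(0, ∞)` the map `r ↦ λ_V(A_{r,s})` is continuous with values in `[0, ∞]`, and it is `∞`
at `r = s`. Since `λ_V({|x| ≥ R₁}) < λ`, compactness of supports gives `s` with `λ_V(A_{R₁,s}) < λ`,
and the intermediate value theorem on `[R₁, s]` yields `R₂`.

Both halves of the continuity come from truncation: soft-thresholding a test function `f` at level
`ε` does not increase its energy, changes its `L²` norm by `O(ε)`, and shrinks its support to
`{|f| ≥ ε}`. For a fixed `f` this set is a compact subset of the interior of the domain, whence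
upper semicontinuity. If a domain is slightly enlarged, then on the added part `f ^ 2` is at most
the distance to the complement times `∫ |∇f| ^ 2`, so a small level `ε`, uniform over normalized `f`
of bounded energy, already removes that part; this is lower semicontinuity.
-/

section SoftThreshold

/-- A `C¹` soft-thresholding function: it vanishes on `[-1, 1]`, has slope `1 - t⁻²` outside, and
stays at bounded distance from the identity. -/
noncomputable def softThreshold (t : ℝ) : ℝ :=
  ∫ s in (0 : ℝ)..t, (1 - (max 1 (s ^ 2))⁻¹)

lemma continuous_inv_max_one_sq : Continuous fun s : ℝ => (max 1 (s ^ 2))⁻¹ :=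
  (by fun_prop : Continuous fun s : ℝ => max 1 (s ^ 2)).inv₀
    fun _ => (zero_lt_one.trans_le (le_max_left _ _)).ne'

lemma inv_max_one_sq_mem_Icc (s : ℝ) : (max 1 (s ^ 2))⁻¹ ∈ Icc (0 : ℝ) 1 :=
  ⟨by positivity, inv_le_one_of_one_le₀ (le_max_left _ _)⟩

lemma hasDerivAt_softThreshold (t : ℝ) :
    HasDerivAt softThreshold (1 - (max 1 (t ^ 2))⁻¹) t :=
  (continuous_const.sub continuous_inv_max_one_sq).integral_hasStrictDerivAt 0 t |>.hasDerivAt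

lemma contDiff_softThreshold : ContDiff ℝ 1 softThreshold := by
  rw [contDiff_one_iff_deriv, funext fun t => (hasDerivAt_softThreshold t).deriv]
  exact ⟨fun t => (hasDerivAt_softThreshold t).differentiableAt,
    continuous_const.sub continuous_inv_max_one_sq⟩

lemma softThreshold_eq_zero {t : ℝ} (ht : |t| ≤ 1) : softThreshold t = 0 := by
  refine (intervalIntegral.integral_congr fun s hs => ?_).trans intervalIntegral.integral_zero
  have hst : |s| ≤ |t| := by simpa using abs_sub_left_of_mem_uIcc hs
  have hs1 : s ^ 2 ≤ 1 := (sq_le_one_iff_abs_le_one s).2 (hst.trans ht)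
  simp [max_eq_left hs1]

lemma abs_softThreshold_le (t : ℝ) : |softThreshold t| ≤ |t| := by
  have hslope : ∀ s : ℝ, ‖1 - (max 1 (s ^ 2))⁻¹‖ ≤ 1 := fun s => by
    obtain ⟨h0, h1⟩ := inv_max_one_sq_mem_Icc s
    rw [Real.norm_eq_abs, abs_le]
    constructor <;> linarith
  simpa [softThreshold] using
    intervalIntegral.norm_integral_le_of_norm_le_const (a := 0) (b := t) fun s _ => hslope s

lemma abs_sub_softThreshold_le (t : ℝ) : |t - softThreshold t| ≤ Real.pi := by
  have hsub : t - softThreshold t = ∫ s in (0 : ℝ)..t, (max 1 (s ^ 2))⁻¹ := by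
    rw [softThreshold, intervalIntegral.integral_sub intervalIntegrable_const
      (continuous_inv_max_one_sq.intervalIntegrable _ _)]
    simp
  have hbound : ∀ s : ℝ, ‖(max 1 (s ^ 2))⁻¹‖ ≤ 2 * (1 + s ^ 2)⁻¹ := fun s => by
    rw [Real.norm_of_nonneg (inv_max_one_sq_mem_Icc s).1, ← div_eq_mul_inv,
      inv_le_comm₀ (by positivity) (by positivity), inv_div]
    linarith [le_max_left 1 (s ^ 2), le_max_right 1 (s ^ 2)]
  calc |t - softThreshold t|
      = ‖∫ s in (0 : ℝ)..t, (max 1 (s ^ 2))⁻¹‖ := by rw [hsub, Real.norm_eq_abs]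
    _ ≤ |∫ s in (0 : ℝ)..t, 2 * (1 + s ^ 2)⁻¹| :=
        intervalIntegral.norm_integral_le_abs_of_norm_le (Eventually.of_forall hbound)
          ((continuous_const.mul <| (by fun_prop : Continuous fun s : ℝ => 1 + s ^ 2).inv₀
            fun s => by positivity).intervalIntegrable _ _)
    _ = |2 * Real.arctan t| := by simp
    _ ≤ Real.pi := by
        rw [abs_le]
        constructor <;> linarith [Real.arctan_lt_pi_div_two t, Real.neg_pi_div_two_lt_arctan t]

end SoftThreshold

section Truncation

variable {f : ℝ → ℝ} {ε : ℝ}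

/-- The `C¹` truncation of `f` at level `ε`, which cuts the support of `f` down to `{ε ≤ |f|}`. -/
noncomputable def truncateBelow (ε : ℝ) (f : ℝ → ℝ) (x : ℝ) : ℝ :=
  ε * softThreshold (f x / ε)

lemma contDiff_truncateBelow (hf : ContDiff ℝ 1 f) : ContDiff ℝ 1 (truncateBelow ε f) :=
  contDiff_const.mul (contDiff_softThreshold.comp (hf.div_const ε))

lemma hasCompactSupport_truncateBelow (hf : HasCompactSupport f) :
    HasCompactSupport (truncateBelow ε f) :=
  hf.comp_left (g := fun y => ε * softThreshold (y / ε)) (by simp [softThreshold])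

lemma abs_deriv_truncateBelow_le (hf : Differentiable ℝ f) (hε : ε ≠ 0) (x : ℝ) :
    |deriv (truncateBelow ε f) x| ≤ |deriv f x| := by
  have hderiv : HasDerivAt (truncateBelow ε f)
      (ε * ((1 - (max 1 ((f x / ε) ^ 2))⁻¹) * (deriv f x / ε))) x :=
    (HasDerivAt.comp (h₂ := softThreshold) x (hasDerivAt_softThreshold _)
      ((hf x).hasDerivAt.div_const ε)).const_mul ε
  obtain ⟨h0, h1⟩ := inv_max_one_sq_mem_Icc (f x / ε)
  rw [hderiv.deriv, mul_left_comm, mul_div_cancel₀ _ hε, abs_mul, abs_of_nonneg (by linarith)]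
  exact mul_le_of_le_one_left (abs_nonneg _) (by linarith)

section PosLevel

variable (f) (hε : 0 < ε)
include hε

lemma abs_truncateBelow_le (x : ℝ) : |truncateBelow ε f x| ≤ |f x| := by
  rw [truncateBelow, abs_mul, abs_of_pos hε, ← le_div_iff₀' hε]
  simpa only [abs_div, abs_of_pos hε] using abs_softThreshold_le (f x / ε)

lemma abs_sub_truncateBelow_le (x : ℝ) : |f x - truncateBelow ε f x| ≤ Real.pi * ε := by
  have hscale : f x - truncateBelow ε f x = (f x / ε - softThreshold (f x / ε)) * ε := by
    rw [truncateBelow, sub_mul, div_mul_cancel₀ _ hε.ne', mul_comm ε]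
  rw [hscale, abs_mul, abs_of_pos hε]
  exact mul_le_mul_of_nonneg_right (abs_sub_softThreshold_le _) hε.le

lemma truncateBelow_eq_zero {x : ℝ} (hx : |f x| ≤ ε) : truncateBelow ε f x = 0 := by
  rw [truncateBelow, softThreshold_eq_zero, mul_zero]
  rwa [abs_div, abs_of_pos hε, div_le_one hε]

end PosLevel

lemma tsupport_truncateBelow_subset (hf : Continuous f) (hε : 0 < ε) :
    tsupport (truncateBelow ε f) ⊆ {x | ε ≤ |f x|} :=
  closure_minimal
    (fun _ hx => le_of_not_ge fun hle => hx (truncateBelow_eq_zero f hε hle))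
    (isClosed_le continuous_const hf.abs)

end Truncation

section SquareIntegrals

variable {f : ℝ → ℝ}

lemma hasCompactSupport_sq (hf : HasCompactSupport f) : HasCompactSupport fun x => f x ^ 2 :=
  hf.comp_left (g := (· ^ 2)) (zero_pow two_ne_zero)

lemma integrable_sq (hf : Continuous f) (hfc : HasCompactSupport f) :
    Integrable fun x => f x ^ 2 :=
  (hf.pow 2).integrable_of_hasCompactSupport (hasCompactSupport_sq hfc)

lemma integrable_deriv_sq (hf : ContDiff ℝ 1 f) (hfc : HasCompactSupport f) :
    Integrable fun x => deriv f x ^ 2 :=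
  integrable_sq (hf.continuous_deriv le_rfl) hfc.deriv

lemma integral_sq_pos (hf : Continuous f) (hfc : HasCompactSupport f) (hf0 : f ≠ 0) :
    0 < ∫ x, f x ^ 2 := by
  obtain ⟨x, hx⟩ := Function.ne_iff.1 hf0
  exact (hf.pow 2).integral_pos_of_hasCompactSupport_nonneg_nonzero (hasCompactSupport_sq hfc)
    (fun x => sq_nonneg _) (pow_ne_zero 2 hx)

lemma sq_setIntegral_le {α : Type*} [MeasurableSpace α] {μ : Measure α} {s : Set α} {f : α → ℝ}
    (hs : μ s ≠ ⊤) (hf : IntegrableOn f s μ) (hf2 : IntegrableOn (fun x => f x ^ 2) s μ) :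
    (∫ x in s, f x ∂μ) ^ 2 ≤ μ.real s * ∫ x in s, f x ^ 2 ∂μ := by
  rcases eq_or_ne (μ s) 0 with h0 | h0
  · simp [Measure.restrict_eq_zero.2 h0]
  have hpos : 0 < μ.real s := ENNReal.toReal_pos h0 hs
  have jensen : (⨍ x in s, f x ∂μ) ^ 2 ≤ ⨍ x in s, f x ^ 2 ∂μ :=
    (even_two.convexOn_pow (𝕜 := ℝ)).map_set_average_le (continuous_pow 2).continuousOn
      isClosed_univ h0 hs (by simp) hf hf2
  rw [setAverage_eq, setAverage_eq, smul_eq_mul, smul_eq_mul, mul_pow, inv_pow,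
    inv_mul_le_iff₀ (by positivity)] at jensen
  rwa [sq (μ.real s), mul_assoc, mul_inv_cancel_left₀ hpos.ne'] at jensen

lemma sq_sub_le_abs_sub_mul_integral_deriv_sq (hf : ContDiff ℝ 1 f)
    (hf' : Integrable fun x => deriv f x ^ 2) (a b : ℝ) :
    (f b - f a) ^ 2 ≤ |b - a| * ∫ x, deriv f x ^ 2 := by
  wlog hab : a ≤ b generalizing a b
  · rw [abs_sub_comm, ← neg_sub, neg_sq]
    exact this b a (le_of_not_ge hab)
  have hderiv : Continuous (deriv f) := hf.continuous_deriv le_rfl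
  have ftc : f b - f a = ∫ x in Ioc a b, deriv f x := by
    rw [← intervalIntegral.integral_of_le hab, intervalIntegral.integral_deriv_eq_sub
      (fun x _ => hf.differentiable one_ne_zero x) (hderiv.intervalIntegrable _ _)]
  calc (f b - f a) ^ 2
      ≤ volume.real (Ioc a b) * ∫ x in Ioc a b, deriv f x ^ 2 := by
        rw [ftc]
        exact sq_setIntegral_le measure_Ioc_lt_top.ne hderiv.integrableOn_Ioc hf'.integrableOn
    _ = |b - a| * ∫ x in Ioc a b, deriv f x ^ 2 := by
        rw [Real.volume_real_Ioc_of_le hab, abs_of_nonneg (sub_nonneg.2 hab)]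
    _ ≤ |b - a| * ∫ x, deriv f x ^ 2 :=
        mul_le_mul_of_nonneg_left
          (setIntegral_le_integral hf' (Eventually.of_forall fun _ => sq_nonneg _)) (abs_nonneg _)

lemma one_sub_mul_sq_sub_div_le_sq {a b η : ℝ} (hη : 0 < η) :
    (1 - η) * a ^ 2 - (a - b) ^ 2 / η ≤ b ^ 2 := by
  have hsq : b ^ 2 - ((1 - η) * a ^ 2 - (a - b) ^ 2 / η)
      = (η * a - (a - b)) ^ 2 / η + (a - b) ^ 2 := by
    field_simp
    ring
  linarith [show 0 ≤ (η * a - (a - b)) ^ 2 / η + (a - b) ^ 2 by positivity]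

lemma integral_sq_truncateBelow_ge {ε η : ℝ} (hf : ContDiff ℝ 1 f) (hfc : HasCompactSupport f)
    (hε : 0 < ε) (hη : 0 < η) :
    ((1 - η) * ∫ x, f x ^ 2) - volume.real (Function.support f) * ((Real.pi * ε) ^ 2 / η)
      ≤ ∫ x, truncateBelow ε f x ^ 2 := by
  have hsupp : MeasurableSet (Function.support f) := hf.continuous.isOpen_support.measurableSet
  have hfin : volume (Function.support f) ≠ ⊤ :=
    ((measure_mono (subset_tsupport f)).trans_lt hfc.isCompact.measure_lt_top).ne
  have hind : Integrable ((Function.support f).indicator fun _ => (Real.pi * ε) ^ 2 / η) :=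
    (integrable_indicator_iff hsupp).2 (integrableOn_const hfin)
  have hsq : Integrable fun x => (1 - η) * f x ^ 2 :=
    (integrable_sq hf.continuous hfc).const_mul _
  have hpointwise : ∀ x, (1 - η) * f x ^ 2
      - (Function.support f).indicator (fun _ => (Real.pi * ε) ^ 2 / η) x
      ≤ truncateBelow ε f x ^ 2 := fun x => by
    by_cases hx : f x = 0
    · simpa [hx] using sq_nonneg (truncateBelow ε f x)
    · rw [indicator_of_mem (Function.mem_support.2 hx)]
      have hdiff : (f x - truncateBelow ε f x) ^ 2 ≤ (Real.pi * ε) ^ 2 :=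
        sq_le_sq' (abs_le.1 (abs_sub_truncateBelow_le f hε x)).1
          (abs_le.1 (abs_sub_truncateBelow_le f hε x)).2
      exact (sub_le_sub_left (by gcongr) _).trans (one_sub_mul_sq_sub_div_le_sq hη)
  have hint := integral_mono (hsq.sub hind)
    (integrable_sq (contDiff_truncateBelow hf).continuous (hasCompactSupport_truncateBelow hfc))
    hpointwise
  simpa only [Pi.sub_apply, integral_sub hsq hind, integral_const_mul, integral_indicator hsupp,
    setIntegral_const, smul_eq_mul] using hint

end SquareIntegrals

section Energy

variable {V f : ℝ → ℝ}

/-- The Schrödinger quadratic form with potential `V`, the numerator of `rayleigh V f`. -/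
noncomputable def schrodingerForm (V f : ℝ → ℝ) : ℝ :=
  ∫ x, (deriv f x ^ 2 + V x * f x ^ 2)

lemma integrable_schrodingerForm (hV : LocallyIntegrable V) (hf : ContDiff ℝ 1 f)
    (hfc : HasCompactSupport f) : Integrable fun x => deriv f x ^ 2 + V x * f x ^ 2 :=
  (integrable_deriv_sq hf hfc).add <| by
    simpa only [smul_eq_mul, Pi.pow_apply] using! hV.integrable_smul_right_of_hasCompactSupport
      (hf.continuous.pow 2) (hasCompactSupport_sq hfc)

variable (hV : LocallyIntegrable V) (hV0 : ∀ᵐ x, 0 ≤ V x)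
include hV hV0

lemma integral_deriv_sq_le_schrodingerForm (hf : ContDiff ℝ 1 f) (hfc : HasCompactSupport f) :
    ∫ x, deriv f x ^ 2 ≤ schrodingerForm V f := by
  refine integral_mono_ae (integrable_deriv_sq hf hfc) (integrable_schrodingerForm hV hf hfc) ?_
  filter_upwards [hV0] with x hx
  exact le_add_of_nonneg_right (mul_nonneg hx (sq_nonneg _))

lemma schrodingerForm_nonneg (hf : ContDiff ℝ 1 f) (hfc : HasCompactSupport f) :
    0 ≤ schrodingerForm V f :=
  (integral_nonneg fun _ => sq_nonneg _).trans (integral_deriv_sq_le_schrodingerForm hV hV0 hf hfc)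

lemma schrodingerForm_truncateBelow_le {ε : ℝ} (hf : ContDiff ℝ 1 f) (hfc : HasCompactSupport f)
    (hε : 0 < ε) : schrodingerForm V (truncateBelow ε f) ≤ schrodingerForm V f := by
  refine integral_mono_ae
    (integrable_schrodingerForm hV (contDiff_truncateBelow hf)
      (hasCompactSupport_truncateBelow hfc))
    (integrable_schrodingerForm hV hf hfc) ?_
  filter_upwards [hV0] with x hx
  have hderiv := sq_le_sq.2
    (abs_deriv_truncateBelow_le (hf.differentiable one_ne_zero) hε.ne' x)
  have hvalue := sq_le_sq.2 (abs_truncateBelow_le f hε x)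
  exact add_le_add hderiv (mul_le_mul_of_nonneg_left hvalue hx)

end Energy

section GroundStateEnergy

variable {V : ℝ → ℝ} {S T : Set ℝ}

lemma lambdaV_le_rayleigh {f : ℝ → ℝ} (hf : TestFor S f) :
    lambdaV V S ≤ ENNReal.ofReal (rayleigh V f) :=
  sInf_le ⟨f, hf, rfl⟩

lemma exists_testFor_rayleigh_lt {c : ℝ≥0∞} (h : lambdaV V S < c) :
    ∃ f, TestFor S f ∧ ENNReal.ofReal (rayleigh V f) < c := by
  obtain ⟨_, ⟨f, hf, rfl⟩, hlt⟩ := sInf_lt_iff.1 h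
  exact ⟨f, hf, hlt⟩

lemma lambdaV_anti (hST : S ⊆ T) : lambdaV V T ≤ lambdaV V S :=
  sInf_le_sInf fun _ ⟨f, ⟨hf, hf0, hfc, hfS⟩, he⟩ => ⟨f, ⟨hf, hf0, hfc, hfS.trans hST⟩, he⟩

lemma support_subset_interior_of_testFor {f : ℝ → ℝ} (hf : TestFor S f) :
    Function.support f ⊆ interior S :=
  interior_maximal ((subset_tsupport f).trans hf.2.2.2) hf.1.continuous.isOpen_support

lemma lambdaV_eq_top_of_interior_eq_empty (hS : interior S = ∅) : lambdaV V S = ⊤ := by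
  by_contra hne
  obtain ⟨f, hf, -⟩ := exists_testFor_rayleigh_lt (lt_top_iff_ne_top.2 hne)
  exact hf.2.1 (Function.support_eq_empty_iff.1
    (subset_eq_empty (support_subset_interior_of_testFor hf) hS))

lemma exists_div_one_sub_lt {ρ : ℝ} {c : ℝ≥0∞} (h : ENNReal.ofReal ρ < c) :
    ∃ η ∈ Ioo (0 : ℝ) 1, ENNReal.ofReal (ρ / (1 - η)) < c := by
  have hcont : ContinuousAt (fun η : ℝ => ENNReal.ofReal (ρ / (1 - η))) 0 :=
    ENNReal.continuous_ofReal.continuousAt.comp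
      (continuousAt_const.div (by fun_prop) (by norm_num))
  have hlt : ∀ᶠ η in 𝓝[>] (0 : ℝ), ENNReal.ofReal (ρ / (1 - η)) < c :=
    nhdsWithin_le_nhds (hcont.eventually_lt_const (by simpa using h))
  exact ((eventually_mem_set.2 (Ioo_mem_nhdsGT one_pos)).and hlt).exists

variable (hV : LocallyIntegrable V) (hV0 : ∀ᵐ x, 0 ≤ V x)
include hV hV0

lemma lambdaV_superlevel_le {f : ℝ → ℝ} {ε η : ℝ} (hf : TestFor S f) (hε : 0 < ε)
    (hη : η ∈ Ioo (0 : ℝ) 1)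
    (hsmall : (2 * Real.pi * ε) ^ 2 * volume.real (Function.support f) ≤ η ^ 2 * ∫ x, f x ^ 2) :
    lambdaV V {x | ε ≤ |f x|} ≤ ENNReal.ofReal (rayleigh V f / (1 - η)) := by
  obtain ⟨hη0, hη1⟩ := hη
  obtain ⟨hfd, hf0, hfc, -⟩ := hf
  have hN : 0 < (1 - η) * ∫ x, f x ^ 2 :=
    mul_pos (sub_pos.2 hη1) (integral_sq_pos hfd.continuous hfc hf0)
  have hmass : (1 - η) * ∫ x, f x ^ 2 ≤ ∫ x, truncateBelow ε f x ^ 2 := by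
    have hloss : volume.real (Function.support f) * ((Real.pi * ε) ^ 2 / (η / 2))
        ≤ η / 2 * ∫ x, f x ^ 2 := by
      rw [← mul_div_assoc, div_le_iff₀ (by positivity)]
      linear_combination hsmall / 4
    linarith [integral_sq_truncateBelow_ge hfd hfc hε (half_pos hη0)]
  have hne : truncateBelow ε f ≠ 0 := by
    intro h0
    simp only [h0, Pi.zero_apply, zero_pow two_ne_zero, integral_zero] at hmass
    exact hN.not_ge hmass
  refine (lambdaV_le_rayleigh ⟨contDiff_truncateBelow hfd, hne,
    hasCompactSupport_truncateBelow hfc,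
    tsupport_truncateBelow_subset hfd.continuous hε⟩).trans (ENNReal.ofReal_le_ofReal ?_)
  calc rayleigh V (truncateBelow ε f)
      ≤ schrodingerForm V f / ((1 - η) * ∫ x, f x ^ 2) :=
        div_le_div₀ (schrodingerForm_nonneg hV hV0 hfd hfc)
          (schrodingerForm_truncateBelow_le hV hV0 hfd hfc hε) hN hmass
    _ = rayleigh V f / (1 - η) := by rw [mul_comm, ← div_div]; rfl

theorem exists_isCompact_subset_interior_lambdaV_lt {c : ℝ≥0∞} (h : lambdaV V S < c) :
    ∃ K ⊆ interior S, IsCompact K ∧ lambdaV V K < c := by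
  obtain ⟨f, hf, hfc⟩ := exists_testFor_rayleigh_lt h
  obtain ⟨η, hη, hηc⟩ := exists_div_one_sub_lt hfc
  have hη0 : 0 < η := hη.1
  have hN := integral_sq_pos hf.1.continuous hf.2.2.1 hf.2.1
  obtain ⟨ε, hsmall, hε⟩ : ∃ ε : ℝ,
      (2 * Real.pi * ε) ^ 2 * volume.real (Function.support f) < η ^ 2 * ∫ x, f x ^ 2 ∧ 0 < ε := by
    have hcont : Continuous fun ε : ℝ =>
        (2 * Real.pi * ε) ^ 2 * volume.real (Function.support f) := by fun_prop
    have hzero : (2 * Real.pi * 0) ^ 2 * volume.real (Function.support f)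
        < η ^ 2 * ∫ x, f x ^ 2 := by
      rw [mul_zero, zero_pow two_ne_zero, zero_mul]
      positivity
    have hlt := (hcont.continuousAt.eventually_lt_const hzero).filter_mono
      (nhdsWithin_le_nhds (s := Ioi 0))
    exact (hlt.and eventually_mem_nhdsWithin).exists
  have hsub : {x | ε ≤ |f x|} ⊆ Function.support f :=
    fun x hx => abs_pos.1 (hε.trans_le hx)
  exact ⟨{x | ε ≤ |f x|}, hsub.trans (support_subset_interior_of_testFor hf),
    hf.2.2.1.isCompact.of_isClosed_subset (isClosed_le continuous_const hf.1.continuous.abs)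
      (hsub.trans (subset_tsupport f)),
    (lambdaV_superlevel_le hV hV0 hf hε hη hsmall.le).trans_lt hηc⟩

lemma sq_lt_of_rayleigh_lt {f : ℝ → ℝ} {m δ : ℝ} (hf : TestFor T f) (hδ : 0 < δ)
    (hray : rayleigh V f < m) {x y : ℝ} (hy : y ∉ T) (hxy : |x - y| ≤ δ) :
    f x ^ 2 < δ * (m * ∫ x, f x ^ 2) := by
  obtain ⟨hfd, hf0, hfc, hfT⟩ := hf
  have hfy : f y = 0 := image_eq_zero_of_notMem_tsupport fun h => hy (hfT h)
  have henergy : schrodingerForm V f < m * ∫ x, f x ^ 2 :=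
    (div_lt_iff₀ (integral_sq_pos hfd.continuous hfc hf0)).1 hray
  calc f x ^ 2 = (f x - f y) ^ 2 := by rw [hfy, sub_zero]
    _ ≤ |x - y| * ∫ x, deriv f x ^ 2 :=
        sq_sub_le_abs_sub_mul_integral_deriv_sq hfd (integrable_deriv_sq hfd hfc) y x
    _ ≤ δ * ∫ x, deriv f x ^ 2 :=
        mul_le_mul_of_nonneg_right hxy (integral_nonneg fun _ => sq_nonneg _)
    _ < δ * (m * ∫ x, f x ^ 2) := mul_lt_mul_of_pos_left
        ((integral_deriv_sq_le_schrodingerForm hV hV0 hfd hfc).trans_lt henergy) hδ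

lemma lambdaV_le_of_rayleigh_lt {f : ℝ → ℝ} {m M δ η : ℝ} (hf : TestFor T f)
    (hray : rayleigh V f < m) (hm : 0 < m) (hM : volume.real (Function.support f) ≤ M)
    (hδ : 0 < δ) (hη : η ∈ Ioo (0 : ℝ) 1) (hsmall : (2 * Real.pi) ^ 2 * m * M * δ ≤ η ^ 2)
    (hT : ∀ x ∈ T \ S, ∃ y ∉ T, |x - y| ≤ δ) :
    lambdaV V S ≤ ENNReal.ofReal (rayleigh V f / (1 - η)) := by
  set N := ∫ x, f x ^ 2
  have hN : 0 < N := integral_sq_pos hf.1.continuous hf.2.2.1 hf.2.1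
  -- By `sq_lt_of_rayleigh_lt`, truncation at this level removes everything outside `S`.
  set ε : ℝ := √(δ * (m * N))
  have hε : 0 < ε := Real.sqrt_pos.2 (by positivity)
  have hε_sq : ε ^ 2 = δ * (m * N) := Real.sq_sqrt (by positivity)
  have hsub : {x | ε ≤ |f x|} ⊆ S := by
    intro x hx
    by_contra hxS
    have hxT : x ∈ T := hf.2.2.2 (subset_tsupport f (abs_pos.1 (hε.trans_le hx)))
    obtain ⟨y, hy, hxy⟩ := hT x ⟨hxT, hxS⟩
    have hlt : f x ^ 2 < ε ^ 2 := hε_sq ▸ sq_lt_of_rayleigh_lt hV hV0 hf hδ hray hy hxy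
    exact (abs_lt_of_sq_lt_sq hlt hε.le).not_ge hx
  refine (lambdaV_anti hsub).trans (lambdaV_superlevel_le hV hV0 hf hε hη ?_)
  calc (2 * Real.pi * ε) ^ 2 * volume.real (Function.support f)
      ≤ (2 * Real.pi * ε) ^ 2 * M := by gcongr
    _ = (2 * Real.pi) ^ 2 * m * M * δ * N := by rw [mul_pow _ ε, hε_sq]; ring
    _ ≤ η ^ 2 * N := by gcongr

theorem exists_pos_forall_lt_lambdaV_of_diff_near_compl {a M : ℝ≥0∞} (ha : a < lambdaV V S)
    (hM : M ≠ ⊤) :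
    ∃ δ > 0, ∀ T : Set ℝ, volume T ≤ M → (∀ x ∈ T \ S, ∃ y ∉ T, |x - y| ≤ δ) →
      a < lambdaV V T := by
  obtain ⟨m, -, ham, hmS⟩ := ENNReal.lt_iff_exists_real_btwn.1 ha
  have hm : 0 < m := ENNReal.ofReal_pos.1 (zero_le.trans_lt ham)
  obtain ⟨η, hη, hηS⟩ := exists_div_one_sub_lt hmS
  have hη0 : 0 < η := hη.1
  have hη1 : 0 < 1 - η := sub_pos.2 hη.2
  have hδ : 0 < η ^ 2 / ((2 * Real.pi) ^ 2 * m * (M.toReal + 1)) := by positivity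
  refine ⟨_, hδ, fun T hTM hT => lt_of_not_ge fun hle => hηS.not_ge ?_⟩
  obtain ⟨f, hf, hfm⟩ := exists_testFor_rayleigh_lt (hle.trans_lt ham)
  have hray : rayleigh V f < m := (ENNReal.ofReal_lt_ofReal_iff hm).1 hfm
  have hvol : volume.real (Function.support f) ≤ M.toReal + 1 :=
    (ENNReal.toReal_mono hM ((measure_mono ((subset_tsupport f).trans hf.2.2.2)).trans hTM)).trans
      (lt_add_one _).le
  calc lambdaV V S
      ≤ ENNReal.ofReal (rayleigh V f / (1 - η)) :=
        lambdaV_le_of_rayleigh_lt hV hV0 hf hray hm hvol hδ hη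
          (mul_div_cancel₀ _ (by positivity)).le hT
    _ ≤ ENNReal.ofReal (m / (1 - η)) := by gcongr

end GroundStateEnergy

section Annulus

/-- The closed annulus `A_{r,s}` of inner radius `r` and outer radius `s` centered at `0`. -/
def annulus (r s : ℝ) : Set ℝ := {x | r ≤ |x| ∧ |x| ≤ s}

lemma interior_setOf_le_abs {r : ℝ} (hr : r ≠ 0) : interior {x : ℝ | r ≤ |x|} = {x | r < |x|} := by
  have hcompl : {x : ℝ | r ≤ |x|} = (Metric.ball 0 r)ᶜ := by
    ext x
    simp
  rw [hcompl, interior_compl, closure_ball _ hr]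
  ext x
  simp

lemma interior_annulus_subset {r s : ℝ} (hr : r ≠ 0) : interior (annulus r s) ⊆ {x | r < |x|} :=
  (interior_mono fun _ hx => hx.1).trans (interior_setOf_le_abs hr).subset

lemma lambdaV_annulus_eq_top {V : ℝ → ℝ} {r s : ℝ} (hr : r ≠ 0) (hsr : s ≤ r) :
    lambdaV V (annulus r s) = ⊤ := by
  refine lambdaV_eq_top_of_interior_eq_empty (eq_empty_of_forall_notMem fun x hx => ?_)
  have hlt : r < |x| := interior_annulus_subset hr hx
  exact ((interior_subset hx).2.trans hsr).not_gt hlt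

lemma exists_abs_eq_abs_sub_eq {ρ : ℝ} (hρ : 0 ≤ ρ) (x : ℝ) :
    ∃ y, |y| = ρ ∧ |x - y| = |(|x| - ρ)| := by
  rcases le_total 0 x with hx | hx
  · exact ⟨ρ, abs_of_nonneg hρ, by rw [abs_of_nonneg hx]⟩
  · exact ⟨-ρ, by rw [abs_neg, abs_of_nonneg hρ], by rw [abs_of_nonpos hx, ← abs_neg]; ring_nf⟩

variable {V : ℝ → ℝ} (hV : LocallyIntegrable V) (hV0 : ∀ᵐ x, 0 ≤ V x)
include hV hV0

lemma lowerSemicontinuousAt_lambdaV_annulus {r : ℝ} (s : ℝ) (hr : 0 < r) :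
    LowerSemicontinuousAt (fun r => lambdaV V (annulus r s)) r := by
  intro a ha
  obtain ⟨δ, hδ, hlt⟩ := exists_pos_forall_lt_lambdaV_of_diff_near_compl hV hV0 ha
    (measure_closedBall_lt_top (μ := volume) (x := (0 : ℝ)) (r := s)).ne
  filter_upwards [lt_mem_nhds (max_lt (sub_lt_self r hδ) hr)] with r' hr'
  refine hlt _ (measure_mono fun x hx => mem_closedBall_zero_iff.2 hx.2) fun x ⟨hx, hxr⟩ => ?_
  have hxr : |x| < r := lt_of_not_ge fun h => hxr ⟨h, hx.2⟩
  obtain ⟨y, hy, hxy⟩ := exists_abs_eq_abs_sub_eq (le_max_right (r - δ) 0) x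
  refine ⟨y, fun hyA => (hyA.1.trans_eq hy).not_gt hr', ?_⟩
  rw [hxy, abs_of_nonneg (sub_nonneg.2 (hr'.le.trans hx.1))]
  linarith [le_max_left (r - δ) 0]

lemma upperSemicontinuousAt_lambdaV_annulus {r : ℝ} (s : ℝ) (hr : r ≠ 0) :
    UpperSemicontinuousAt (fun r => lambdaV V (annulus r s)) r := by
  intro c hc
  obtain ⟨K, hKA, hK, hKc⟩ := exists_isCompact_subset_interior_lambdaV_lt hV hV0 hc
  obtain ⟨r₁, hr₁, hKr₁⟩ := hK.exists_forall_le' continuous_abs.continuousOn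
    fun x hx => interior_annulus_subset hr (hKA hx)
  filter_upwards [gt_mem_nhds hr₁] with r' hr'
  have hKr' : K ⊆ annulus r' s := fun x hx =>
    ⟨hr'.le.trans (hKr₁ x hx), (interior_subset (hKA hx)).2⟩
  exact (lambdaV_anti hKr').trans_lt hKc

lemma continuousOn_lambdaV_annulus (s : ℝ) :
    ContinuousOn (fun r => lambdaV V (annulus r s)) (Ioi 0) := fun _ hr =>
  (continuousAt_iff_lower_upperSemicontinuousAt.2
    ⟨lowerSemicontinuousAt_lambdaV_annulus hV hV0 s hr,
      upperSemicontinuousAt_lambdaV_annulus hV hV0 s (ne_of_gt hr)⟩).continuousWithinAt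

lemma exists_lambdaV_annulus_lt {R : ℝ} {c : ℝ≥0∞} (h : lambdaV V {x | R ≤ |x|} < c) :
    ∃ s, lambdaV V (annulus R s) < c := by
  obtain ⟨K, hKR, hK, hKc⟩ := exists_isCompact_subset_interior_lambdaV_lt hV hV0 h
  obtain ⟨s, hs⟩ := hK.isBounded.exists_norm_le
  have hKs : K ⊆ annulus R s := fun x hx =>
    ⟨interior_subset (s := {x | R ≤ |x|}) (hKR hx), hs x hx⟩
  exact ⟨s, (lambdaV_anti hKs).trans_lt hKc⟩

theorem ticket_zone_principle_general {lam R₁ : ℝ} (hR₁ : 0 < R₁)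
    (hlam : lambdaV V {x | R₁ ≤ |x|} < ENNReal.ofReal lam) :
    ∃ R₂ R₃ : ℝ, R₁ ≤ R₂ ∧ R₂ < R₃ ∧ lambdaV V (annulus R₁ R₃) ≤ ENNReal.ofReal lam ∧
      lambdaV V (annulus R₂ R₃) = ENNReal.ofReal lam := by
  obtain ⟨R₃, hlt⟩ := exists_lambdaV_annulus_lt hV hV0 hlam
  have hR₁₃ : R₁ < R₃ := lt_of_not_ge fun hle =>
    hlt.not_ge (le_top.trans_eq (lambdaV_annulus_eq_top hR₁.ne' hle).symm)
  obtain ⟨R₂, ⟨hR₁₂, -⟩, hR₂⟩ := intermediate_value_Icc hR₁₃.le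
    ((continuousOn_lambdaV_annulus hV hV0 R₃).mono fun _ hr => hR₁.trans_le hr.1)
    ⟨hlt.le, le_top.trans_eq (lambdaV_annulus_eq_top (hR₁.trans hR₁₃).ne' le_rfl).symm⟩
  have hR₂₃ : R₂ < R₃ := lt_of_not_ge fun hle => ENNReal.ofReal_ne_top
    (hR₂.symm.trans (lambdaV_annulus_eq_top (hR₁.trans_le hR₁₂).ne' hle))
  exact ⟨R₂, R₃, hR₁₂, hR₂₃, hlt.le, hR₂⟩

end Annulus

/-- **Corollary 3.4 (ticket zone principle) for `G = ℝ`, centered at `0`.** If `Σ_V < ∞` and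
`λ > Σ_V`, then for any `R₁ > 0` there exist `R₃ > R₂ ≥ R₁` with
`λ_V(A_{R₁,R₃}) ≤ λ` and `λ_V(A_{R₂,R₃}) = λ`, where `A_{r,s} = {x : r ≤ |x| ≤ s}`. -/
theorem ticket_zone_principle (V : ℝ → ℝ) (hmeas : Measurable V)
    (hloc : LocallyIntegrable V) (hpos : ∀ᵐ x ∂(volume : Measure ℝ), 0 ≤ V x)
    (hfin : SigmaV V ≠ ⊤) (lam : ℝ) (hlam : SigmaV V < ENNReal.ofReal lam) :
    ∀ R₁ : ℝ, 0 < R₁ → ∃ R₂ R₃ : ℝ, R₁ ≤ R₂ ∧ R₂ < R₃ ∧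
      lambdaV V {x : ℝ | R₁ ≤ |x| ∧ |x| ≤ R₃} ≤ ENNReal.ofReal lam ∧
      lambdaV V {x : ℝ | R₂ ≤ |x| ∧ |x| ≤ R₃} = ENNReal.ofReal lam :=
  fun R₁ hR₁ => ticket_zone_principle_general hloc hpos hR₁
    ((le_iSup₂ (f := fun R (_ : 0 < R) => lambdaV V {x : ℝ | R ≤ |x|}) R₁ hR₁).trans_lt hlam)
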